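/- For LOC(H,T) with any α-type input distribution, I(X;Y) ≥ J(rank(X);rank(Y)) + I(⟨X^T⟩;⟨Y^T⟩), where Y = XH; moreover, equality holds if LOC(H,T) is row-space symmetric. -/

import Mathlib

open scoped Classical
open Finset Matrix Module

noncomputable section

/-- χ_m[r] = (q^m − 1)(q^m − q)⋯(q^m − q^{r−1}), with χ_m[0] = 1. -/
def chi (q m r : ℕ) : ℕ := ∏ i ∈ Finset.range r, (q ^ m - q ^ i)

/-- χ̃_m[r] = χ_m[r] · q^{−mr}, as a real number. -/
def chiTilde (q m r : ℕ) : ℝ := (chi q m r : ℝ) / (q : ℝ) ^ (m * r)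

/-- Gaussian binomial [m choose r]_q = χ_m[r]/χ_r[r], as a real number. -/
def gaussR (q m r : ℕ) : ℝ := (chi q m r : ℝ) / (chi q r r : ℝ)

variable {F : Type} [Field F] [Fintype F]

/-- Column space of a matrix. -/
def colSpace {m n : ℕ} (A : Matrix (Fin m) (Fin n) F) : Submodule F (Fin m → F) :=
  LinearMap.range A.mulVecLin

/-- Row space of a matrix. -/
def rowSpace {m n : ℕ} (A : Matrix (Fin m) (Fin n) F) : Submodule F (Fin n → F) :=
  colSpace Aᵀ

/-- Pr{XH = Y} for a random transfer matrix H with PMF `pH`, input `X`, output `Y`. -/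
def prXY {k M N : ℕ} (pH : Matrix (Fin M) (Fin N) F → ℝ)
    (X : Matrix (Fin k) (Fin M) F) (Y : Matrix (Fin k) (Fin N) F) : ℝ :=
  ∑ Hm : Matrix (Fin M) (Fin N) F, if X * Hm = Y then pH Hm else 0

/-- A PMF on a finite type: nonnegative and summing to one. -/
def IsPMF {Ω : Type*} [Fintype Ω] (p : Ω → ℝ) : Prop :=
  (∀ x, 0 ≤ p x) ∧ ∑ x, p x = 1

/-- α-type distribution: matrices with the same row space are equiprobable. -/
def IsAlphaType {T M : ℕ} (p : Matrix (Fin T) (Fin M) F → ℝ) : Prop :=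
  ∀ X X' : Matrix (Fin T) (Fin M) F, rowSpace X = rowSpace X' → p X = p X'

/-- Mutual information I(f;g) (base 2) between two functions of a finitely
distributed random element with PMF `p`; terms of zero probability vanish. -/
def mutualInfo {Ω A B : Type*} [Fintype Ω] (p : Ω → ℝ) (f : Ω → A) (g : Ω → B) : ℝ :=
  ∑ ω : Ω, p ω * Real.logb 2
    ((∑ ω' : Ω, if f ω' = f ω ∧ g ω' = g ω then p ω' else 0) /
      ((∑ ω' : Ω, if f ω' = f ω then p ω' else 0) *
        (∑ ω' : Ω, if g ω' = g ω then p ω' else 0)))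

/-- Joint PMF of the input X and the independent transfer matrix H;
the channel output is Y = XH, i.e., `ω.1 * ω.2`. -/
def jointPMF {T M N : ℕ} (pX : Matrix (Fin T) (Fin M) F → ℝ)
    (pH : Matrix (Fin M) (Fin N) F → ℝ) :
    Matrix (Fin T) (Fin M) F × Matrix (Fin M) (Fin N) F → ℝ :=
  fun ω => pX ω.1 * pH ω.2

/-- I(X;Y) for the LOC with input PMF `pX` and transfer PMF `pH`. -/
def miXY {T M N : ℕ} (pX : Matrix (Fin T) (Fin M) F → ℝ)
    (pH : Matrix (Fin M) (Fin N) F → ℝ) : ℝ :=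
  mutualInfo (jointPMF pX pH) (fun ω => ω.1) (fun ω => ω.1 * ω.2)

/-- I(⟨X⟩;⟨Y⟩), mutual information between the column spaces. -/
def miColCol {T M N : ℕ} (pX : Matrix (Fin T) (Fin M) F → ℝ)
    (pH : Matrix (Fin M) (Fin N) F → ℝ) : ℝ :=
  mutualInfo (jointPMF pX pH) (fun ω => colSpace ω.1) (fun ω => colSpace (ω.1 * ω.2))

/-- I(⟨X^T⟩;⟨Y^T⟩), mutual information between the row spaces. -/
def miRowRow {T M N : ℕ} (pX : Matrix (Fin T) (Fin M) F → ℝ)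
    (pH : Matrix (Fin M) (Fin N) F → ℝ) : ℝ :=
  mutualInfo (jointPMF pX pH) (fun ω => rowSpace ω.1) (fun ω => rowSpace (ω.1 * ω.2))

/-- I(rank(X);rank(Y)). -/
def miRankRank {T M N : ℕ} (pX : Matrix (Fin T) (Fin M) F → ℝ)
    (pH : Matrix (Fin M) (Fin N) F → ℝ) : ℝ :=
  mutualInfo (jointPMF pX pH) (fun ω => ω.1.rank) (fun ω => (ω.1 * ω.2).rank)

/-- Pr{rank(X) = r}. -/
def prRankX {T M : ℕ} (pX : Matrix (Fin T) (Fin M) F → ℝ) (r : ℕ) : ℝ :=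
  ∑ x : Matrix (Fin T) (Fin M) F, if x.rank = r then pX x else 0

/-- Pr{rank(X) = r, rank(Y) = s} where Y = XH. -/
def prRankXY {T M N : ℕ} (pX : Matrix (Fin T) (Fin M) F → ℝ)
    (pH : Matrix (Fin M) (Fin N) F → ℝ) (r s : ℕ) : ℝ :=
  ∑ ω : Matrix (Fin T) (Fin M) F × Matrix (Fin M) (Fin N) F,
    if ω.1.rank = r ∧ (ω.1 * ω.2).rank = s then jointPMF pX pH ω else 0

/-- J(rank(X);rank(Y)) = ∑_{r,s} Pr{rank X = r, rank Y = s} · log₂(χ_T[s]/χ_r[s]). -/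
def Jrank (q : ℕ) {T M N : ℕ} (pX : Matrix (Fin T) (Fin M) F → ℝ)
    (pH : Matrix (Fin M) (Fin N) F → ℝ) : ℝ :=
  ∑ r ∈ Finset.range (T + 1), ∑ s ∈ Finset.range (T + 1),
    prRankXY pX pH r s * Real.logb 2 ((chi q T s : ℝ) / (chi q r s : ℝ))

/-- Row-space-symmetric LOC: the transition probability P(Y|X) for ⟨Y⟩ ⊆ ⟨X⟩
is determined by the row spaces of the input and output matrices. -/
def RowSpaceSymmetric (T : ℕ) {M N : ℕ} (pH : Matrix (Fin M) (Fin N) F → ℝ) : Prop :=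
  ∀ (X X' : Matrix (Fin T) (Fin M) F) (Y Y' : Matrix (Fin T) (Fin N) F),
    colSpace Y ≤ colSpace X → colSpace Y' ≤ colSpace X' →
    rowSpace X = rowSpace X' → rowSpace Y = rowSpace Y' →
    prXY pH X Y = prXY pH X' Y'

/-- Pr{⟨XH⟩ = V} for a fixed input matrix X. -/
def prColY (T : ℕ) {M N : ℕ} (pH : Matrix (Fin M) (Fin N) F → ℝ)
    (X : Matrix (Fin T) (Fin M) F) (V : Submodule F (Fin T → F)) : ℝ :=
  ∑ Hm : Matrix (Fin M) (Fin N) F, if colSpace (X * Hm) = V then pH Hm else 0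

/-- Unique subspace degradation: Pr{⟨XH⟩ = V} is the same for all inputs X
with the same column space. -/
def UniqueSubspaceDegradation (T : ℕ) {M N : ℕ}
    (pH : Matrix (Fin M) (Fin N) F → ℝ) : Prop :=
  ∀ (V : Submodule F (Fin T → F)) (X X' : Matrix (Fin T) (Fin M) F),
    colSpace X = colSpace X' → prColY T pH X V = prColY T pH X' V

/-- Rank-symmetric LOC: P(Y|X) = μ(rank X, rank Y) when ⟨Y⟩ ⊆ ⟨X⟩, and 0 otherwise. -/
def RankSymmetric (T : ℕ) {M N : ℕ} (pH : Matrix (Fin M) (Fin N) F → ℝ) : Prop :=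
  ∃ μ : ℕ → ℕ → ℝ, (∀ a b, 0 ≤ μ a b ∧ μ a b ≤ 1) ∧
    ∀ (X : Matrix (Fin T) (Fin M) F) (Y : Matrix (Fin T) (Fin N) F),
      prXY pH X Y = if colSpace Y ≤ colSpace X then μ X.rank Y.rank else 0

/-- rank*(H) = max{r : Pr{rank H = r} > 0}. -/
def rankStar {M N : ℕ} (pH : Matrix (Fin M) (Fin N) F → ℝ) : ℕ :=
  sSup {r : ℕ | 0 < ∑ Hm : Matrix (Fin M) (Fin N) F, if Hm.rank = r then pH Hm else 0}

/-!
All mutual informations are written as `H(X) + H(Y) - H(X, Y)`, and the entropies of `X`, `Y` and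
`(X, Y)` are compared with those of the row spaces `U = ⟨Xᵀ⟩`, `V = ⟨Yᵀ⟩` and of the pair `(U, V)`.
An α-type input makes `X` and, because the channel commutes with left multiplication by `GL_T`,
also `Y` uniform given its row space, so `H(X) = H(U) + 𝔼 log χ_T[rank X]` and
`H(Y) = H(V) + 𝔼 log χ_T[rank Y]`. Given `(U, V)`, the pair `(X, Y)` ranges over the matrices with
these row spaces and `⟨Y⟩ ⊆ ⟨X⟩`, of which there are `χ_T[rank X] χ_{rank X}[rank Y]`; hence
`H(X, Y) ≤ H(U, V) + 𝔼 log (χ_T[rank X] χ_{rank X}[rank Y])`, with equality when the conditional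
law is uniform, as it is for a row-space symmetric channel.
-/

section Entropy

variable {Ω A B : Type*} [Fintype Ω]

/-- The law of `f` under the mass function `p`, i.e. `a ↦ Pr{f = a}`. -/
def law (p : Ω → ℝ) (f : Ω → A) (a : A) : ℝ :=
  ∑ ω, if f ω = a then p ω else 0

/-- The Shannon entropy, in bits, of `f` under the mass function `p`. It is written as an
expectation over the sample space, so that the codomain of `f` need not be finite. -/
def entropy (p : Ω → ℝ) (f : Ω → A) : ℝ :=
  -∑ ω, p ω * Real.logb 2 (law p f (f ω))

lemma law_nonneg {p : Ω → ℝ} (hp : ∀ ω, 0 ≤ p ω) (f : Ω → A) (a : A) : 0 ≤ law p f a :=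
  sum_nonneg fun ω _ ↦ ite_nonneg (hp ω) le_rfl

lemma le_law_apply {p : Ω → ℝ} (hp : ∀ ω, 0 ≤ p ω) (f : Ω → A) (ω : Ω) :
    p ω ≤ law p f (f ω) := by
  simpa [law] using single_le_sum (f := fun ω' ↦ if f ω' = f ω then p ω' else 0)
    (fun ω' _ ↦ ite_nonneg (hp ω') le_rfl) (mem_univ ω)

lemma law_apply_pos {p : Ω → ℝ} (hp : ∀ ω, 0 ≤ p ω) (f : Ω → A) {ω : Ω} (hω : p ω ≠ 0) :
    0 < law p f (f ω) :=
  ((hp ω).lt_of_ne' hω).trans_le (le_law_apply hp f ω)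

lemma sum_law_mul (p : Ω → ℝ) {f : Ω → A} {S : Finset A} (hS : ∀ ω, f ω ∈ S) (u : A → ℝ) :
    ∑ a ∈ S, law p f a * u a = ∑ ω, p ω * u (f ω) := by
  simp only [law, sum_mul, ite_mul, zero_mul]
  rw [sum_comm]
  simp [hS]

lemma mutualInfo_eq_entropy {p : Ω → ℝ} (hp : ∀ ω, 0 ≤ p ω) (f : Ω → A) (g : Ω → B) :
    mutualInfo p f g = entropy p f + entropy p g - entropy p (fun ω ↦ (f ω, g ω)) := by
  have hterm (ω : Ω) :
      p ω * Real.logb 2 (law p (fun ω ↦ (f ω, g ω)) (f ω, g ω) /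
          (law p f (f ω) * law p g (g ω))) =
        p ω * Real.logb 2 (law p (fun ω ↦ (f ω, g ω)) (f ω, g ω)) -
          p ω * Real.logb 2 (law p f (f ω)) - p ω * Real.logb 2 (law p g (g ω)) := by
    by_cases hω : p ω = 0
    · simp [hω]
    · have hf := (law_apply_pos hp f hω).ne'
      have hg := (law_apply_pos hp g hω).ne'
      have hfg := (law_apply_pos hp (fun ω ↦ (f ω, g ω)) hω).ne'
      rw [Real.logb_div hfg (mul_ne_zero hf hg), Real.logb_mul hf hg]
      ring
  calc mutualInfo p f g
      = ∑ ω, p ω * Real.logb 2 (law p (fun ω ↦ (f ω, g ω)) (f ω, g ω) /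
          (law p f (f ω) * law p g (g ω))) := by simp only [mutualInfo, law, Prod.mk.injEq]
    _ = entropy p f + entropy p g - entropy p (fun ω ↦ (f ω, g ω)) := by
      simp only [hterm, sum_sub_distrib, entropy]
      ring

lemma sum_mul_logb_nonpos {b : ℝ} (hb : 1 < b) {p u : Ω → ℝ} (hp : ∀ ω, 0 ≤ p ω)
    (hu : ∀ ω, p ω ≠ 0 → 0 < u ω) (hsum : ∑ ω, p ω * u ω ≤ ∑ ω, p ω) :
    ∑ ω, p ω * Real.logb b (u ω) ≤ 0 := by
  have hlog (ω : Ω) : p ω * Real.log (u ω) ≤ p ω * u ω - p ω := by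
    by_cases hω : p ω = 0
    · simp [hω]
    · linarith [mul_le_mul_of_nonneg_left (Real.log_le_sub_one_of_pos (hu ω hω)) (hp ω)]
  have hnat : ∑ ω, p ω * Real.log (u ω) ≤ 0 := by
    have := sum_le_sum fun ω (_ : ω ∈ univ) ↦ hlog ω
    rw [sum_sub_distrib] at this
    linarith
  simp only [Real.logb, ← mul_div_assoc, ← sum_div]
  exact div_nonpos_of_nonpos_of_nonneg hnat (Real.log_pos hb).le

variable [DecidableEq B]

lemma law_comp (p : Ω → ℝ) {f : Ω → A} {S : Finset A} (hS : ∀ ω, f ω ∈ S) (φ : A → B) (b : B) :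
    law p (fun ω ↦ φ (f ω)) b = ∑ a ∈ S with φ a = b, law p f a := by
  have h := sum_law_mul p hS fun a ↦ if φ a = b then 1 else 0
  simp only [mul_ite, mul_one, mul_zero, ← sum_filter] at h
  rw [h, law, sum_filter]
  congr!

lemma sum_law_comp_div_card (p : Ω → ℝ) {f : Ω → A} {S : Finset A} (hS : ∀ ω, f ω ∈ S)
    (φ : A → B) :
    ∑ a ∈ S, law p (fun ω ↦ φ (f ω)) (φ a) / #{a' ∈ S | φ a' = φ a} = ∑ ω, p ω := by
  rw [sum_comp (fun b ↦ law p (fun ω ↦ φ (f ω)) b / #{a' ∈ S | φ a' = b}) φ]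
  calc ∑ b ∈ S.image φ, #{a ∈ S | φ a = b} •
        (law p (fun ω ↦ φ (f ω)) b / #{a ∈ S | φ a = b})
      = ∑ b ∈ S.image φ, law p (fun ω ↦ φ (f ω)) b := by
        refine sum_congr rfl fun b hb ↦ ?_
        have hcard : (#{a ∈ S | φ a = b} : ℝ) ≠ 0 := by
          simpa [filter_eq_empty_iff] using hb
        rw [nsmul_eq_mul, mul_div_cancel₀ _ hcard]
    _ = ∑ ω, p ω := by
        simpa using sum_law_mul p (fun ω ↦ mem_image_of_mem φ (hS ω)) 1

lemma entropy_sub_entropy_comp {p : Ω → ℝ} (hp : ∀ ω, 0 ≤ p ω) {f : Ω → A} {S : Finset A}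
    (hS : ∀ ω, f ω ∈ S) (φ : A → B) :
    entropy p f - (entropy p (fun ω ↦ φ (f ω)) +
        ∑ ω, p ω * Real.logb 2 #{a ∈ S | φ a = φ (f ω)}) =
      ∑ ω, p ω * Real.logb 2 (law p (fun ω ↦ φ (f ω)) (φ (f ω)) / #{a ∈ S | φ a = φ (f ω)} /
        law p f (f ω)) := by
  simp only [entropy, ← sum_neg_distrib, ← sum_add_distrib, ← sum_sub_distrib]
  refine sum_congr rfl fun ω _ ↦ ?_
  by_cases hω : p ω = 0
  · simp [hω]
  · have hf := (law_apply_pos hp f hω).ne'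
    have hφ := (law_apply_pos hp (fun ω ↦ φ (f ω)) hω).ne'
    have hcard : (#{a ∈ S | φ a = φ (f ω)} : ℝ) ≠ 0 :=
      Nat.cast_ne_zero.2 (card_ne_zero_of_mem (mem_filter.2 ⟨hS ω, rfl⟩))
    rw [Real.logb_div (div_ne_zero hφ hcard) hf, Real.logb_div hφ hcard]
    ring

theorem entropy_le_entropy_comp_add {p : Ω → ℝ} (hp : ∀ ω, 0 ≤ p ω) {f : Ω → A} {S : Finset A}
    (hS : ∀ ω, f ω ∈ S) (φ : A → B) :
    entropy p f ≤ entropy p (fun ω ↦ φ (f ω)) +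
      ∑ ω, p ω * Real.logb 2 #{a ∈ S | φ a = φ (f ω)} := by
  rw [← sub_nonpos, entropy_sub_entropy_comp hp hS φ]
  set P := law p (fun ω ↦ φ (f ω))
  refine sum_mul_logb_nonpos one_lt_two hp (fun ω hω ↦ ?_) ?_
  · have hcard : 0 < #{a ∈ S | φ a = φ (f ω)} := card_pos.2 ⟨f ω, mem_filter.2 ⟨hS ω, rfl⟩⟩
    have hf := law_apply_pos hp f hω
    have hφ : 0 < P (φ (f ω)) := law_apply_pos hp (fun ω ↦ φ (f ω)) hω
    positivity
  · rw [← sum_law_mul p hS fun a ↦ P (φ a) / #{a' ∈ S | φ a' = φ a} / law p f a,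
      ← sum_law_comp_div_card p hS φ]
    refine sum_le_sum fun a _ ↦ ?_
    by_cases ha : law p f a = 0
    · simpa [ha] using div_nonneg (law_nonneg hp (fun ω ↦ φ (f ω)) (φ a)) (Nat.cast_nonneg _)
    · exact (mul_div_cancel₀ _ ha).le

theorem entropy_eq_entropy_comp_add {p : Ω → ℝ} (hp : ∀ ω, 0 ≤ p ω) {f : Ω → A} {S : Finset A}
    (hS : ∀ ω, f ω ∈ S) {φ : A → B}
    (hconst : ∀ a ∈ S, ∀ a' ∈ S, φ a = φ a' → law p f a = law p f a') :
    entropy p f = entropy p (fun ω ↦ φ (f ω)) +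
      ∑ ω, p ω * Real.logb 2 #{a ∈ S | φ a = φ (f ω)} := by
  rw [← sub_eq_zero, entropy_sub_entropy_comp hp hS φ]
  refine sum_eq_zero fun ω _ ↦ ?_
  by_cases hω : p ω = 0
  · simp [hω]
  · have hf := (law_apply_pos hp f hω).ne'
    have hcard : (#{a ∈ S | φ a = φ (f ω)} : ℝ) ≠ 0 :=
      Nat.cast_ne_zero.2 (card_ne_zero_of_mem (mem_filter.2 ⟨hS ω, rfl⟩))
    have hlaw : law p (fun ω ↦ φ (f ω)) (φ (f ω)) =
        #{a ∈ S | φ a = φ (f ω)} * law p f (f ω) := by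
      rw [law_comp p hS, ← nsmul_eq_mul]
      refine sum_eq_card_nsmul fun a ha ↦ ?_
      obtain ⟨haS, haφ⟩ := mem_filter.1 ha
      exact hconst a haS (f ω) (hS ω) haφ
    rw [hlaw, mul_div_cancel_left₀ _ hcard, div_self hf, Real.logb_one, mul_zero]

end Entropy

section RowAndColumnSpaces

variable {K : Type} [Field K] {l m n : ℕ}

lemma colSpace_eq_span_range_col (A : Matrix (Fin m) (Fin n) K) :
    colSpace A = Submodule.span K (Set.range A.col) :=
  A.range_mulVecLin

lemma rowSpace_eq_span_range_row (A : Matrix (Fin m) (Fin n) K) :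
    rowSpace A = Submodule.span K (Set.range A.row) :=
  Aᵀ.range_mulVecLin

lemma finrank_colSpace (A : Matrix (Fin m) (Fin n) K) : finrank K (colSpace A) = A.rank := rfl

lemma finrank_rowSpace (A : Matrix (Fin m) (Fin n) K) : finrank K (rowSpace A) = A.rank :=
  A.rank_transpose

lemma colSpace_mul_le (A : Matrix (Fin m) (Fin n) K) (B : Matrix (Fin n) (Fin l) K) :
    colSpace (A * B) ≤ colSpace A := by
  rw [colSpace, mulVecLin_mul]
  exact LinearMap.range_comp_le_range _ _

lemma rowSpace_mul_le (A : Matrix (Fin m) (Fin n) K) (B : Matrix (Fin n) (Fin l) K) :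
    rowSpace (A * B) ≤ rowSpace B := by
  rw [rowSpace, transpose_mul]
  exact colSpace_mul_le _ _

lemma exists_eq_mul_of_rowSpace_le {A : Matrix (Fin m) (Fin n) K} {B : Matrix (Fin l) (Fin n) K}
    (h : rowSpace A ≤ rowSpace B) : ∃ C : Matrix (Fin m) (Fin l) K, A = C * B := by
  have hrow (i : Fin m) : ∃ c : Fin l → K, Bᵀ *ᵥ c = A.row i :=
    h (rowSpace_eq_span_range_row A ▸ Submodule.subset_span (Set.mem_range_self i))
  choose C hC using hrow
  refine ⟨of C, funext fun i ↦ ?_⟩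
  rw [mul_apply_eq_vecMul, ← mulVec_transpose]
  exact (hC i).symm

lemma exists_GL_mul_eq_of_rowSpace_eq {A B : Matrix (Fin m) (Fin n) K}
    (h : rowSpace A = rowSpace B) : ∃ G : GL (Fin m) K, G.val * A = B := by
  obtain ⟨C, hA⟩ := exists_eq_mul_of_rowSpace_le h.le
  obtain ⟨D, hB⟩ := exists_eq_mul_of_rowSpace_le h.ge
  -- `D` is injective on the column space of `A`, so its restriction there extends to an
  -- automorphism of `Kᵐ`.
  have hinj : Function.Injective (D.mulVecLin.domRestrict (colSpace A)) := by
    refine (injective_iff_map_eq_zero _).2 ?_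
    rintro ⟨_, v, rfl⟩ hv
    have hBv : B *ᵥ v = 0 := by rw [hB, ← mulVec_mulVec]; exact hv
    refine Subtype.ext (show A *ᵥ v = 0 from ?_)
    rw [hA, ← mulVec_mulVec, hBv, mulVec_zero]
  obtain ⟨g, hg⟩ := Submodule.exists_linearEquiv_restrict_eq (LinearEquiv.ofInjective _ hinj)
  obtain ⟨G, hG⟩ := GeneralLinearGroup.toLin.surjective (.ofLinearEquiv g)
  have hGg (w : Fin m → K) : G.val *ᵥ w = g w := by
    rw [← mulVecLin_apply, ← GeneralLinearGroup.toLin_apply, hG]; rfl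
  refine ⟨G, mulVec_injective (funext fun v ↦ ?_)⟩
  rw [hB, ← mulVec_mulVec, ← mulVec_mulVec, hGg]
  exact (hg ⟨A *ᵥ v, v, rfl⟩).symm

lemma rowSpace_GL_mul (G : GL (Fin m) K) (A : Matrix (Fin m) (Fin n) K) :
    rowSpace (G.val * A) = rowSpace A := by
  refine le_antisymm (rowSpace_mul_le _ _) ?_
  simpa only [Units.inv_mul_cancel_left, ← Matrix.mul_assoc, Units.inv_mul, Matrix.one_mul]
    using rowSpace_mul_le G⁻¹.val (G.val * A)

lemma exists_rowSpace_eq (V : Submodule K (Fin n → K)) :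
    ∃ (B : Matrix (Fin (finrank K V)) (Fin n) K) (R : Matrix (Fin n) (Fin (finrank K V)) K),
      rowSpace B = V ∧ B * R = 1 := by
  let b := finBasis K V
  let B : Matrix (Fin (finrank K V)) (Fin n) K := of fun i ↦ (b i : Fin n → K)
  have hB : rowSpace B = V := by
    have hrange : Set.range B.row = V.subtype '' Set.range b := by
      rw [← Set.range_comp]; rfl
    rw [rowSpace_eq_span_range_row, hrange, Submodule.span_image, b.span_eq,
      Submodule.map_top, Submodule.range_subtype]
  have hsurj : Function.Surjective B.mulVec := by
    have hrank : finrank K (colSpace B) = finrank K (Fin (finrank K V) → K) := by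
      rw [finrank_colSpace, ← finrank_rowSpace, hB, finrank_fin_fun]
    exact LinearMap.range_eq_top.1 (Submodule.eq_top_of_finrank_eq hrank)
  obtain ⟨R, hR⟩ := mulVec_surjective_iff_exists_right_inverse.1 hsurj
  exact ⟨B, R, hB, hR⟩

lemma colSpace_mul_of_mul_eq_one (C : Matrix (Fin m) (Fin l) K) {B : Matrix (Fin l) (Fin n) K}
    {R : Matrix (Fin n) (Fin l) K} (h : B * R = 1) : colSpace (C * B) = colSpace C := by
  refine le_antisymm (colSpace_mul_le C B) ?_
  simpa [Matrix.mul_assoc, h] using colSpace_mul_le (C * B) R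

lemma linearIndependent_col_iff_rank_eq {C : Matrix (Fin m) (Fin l) K} :
    LinearIndependent K C.col ↔ C.rank = l := by
  rw [linearIndependent_iff_card_eq_finrank_span, rank_eq_finrank_span_cols, Fintype.card_fin,
    eq_comm, Set.finrank]

end RowAndColumnSpaces

section Counting

lemma chi_pos {q m r : ℕ} (hq : 1 < q) (h : r ≤ m) : 0 < chi q m r :=
  prod_pos fun _ hi ↦ Nat.sub_pos_of_lt (Nat.pow_lt_pow_right hq ((mem_range.1 hi).trans_le h))

lemma chi_eq_zero_of_lt (q : ℕ) {m r : ℕ} (h : m < r) : chi q m r = 0 :=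
  prod_eq_zero (mem_range.2 h) (Nat.sub_self _)

variable {m n : ℕ}

lemma card_linearIndependent_eq_chi (W : Type*) [AddCommGroup W] [Module F W] [Finite W] (r : ℕ) :
    Nat.card {c : Fin r → W // LinearIndependent F c} =
      chi (Fintype.card F) (finrank F W) r := by
  obtain hr | hr := le_or_gt r (finrank F W)
  · rw [card_linearIndependent hr, chi, prod_range]
  · rw [chi_eq_zero_of_lt _ hr, Nat.card_eq_zero]
    exact .inl ⟨fun c ↦ hr.not_ge (by simpa using c.2.fintype_card_le_finrank)⟩

lemma card_linearIndependent_col_colSpace_le (W : Submodule F (Fin m → F)) (r : ℕ) :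
    #{C : Matrix (Fin m) (Fin r) F | LinearIndependent F C.col ∧ colSpace C ≤ W} =
      chi (Fintype.card F) (finrank F W) r := by
  rw [← card_linearIndependent_eq_chi, ← Fintype.card_subtype, ← Nat.card_eq_fintype_card]
  have hcol (C : Matrix (Fin m) (Fin r) F) : colSpace C ≤ W ↔ ∀ j, C.col j ∈ W := by
    rw [colSpace_eq_span_range_col, Submodule.span_le, Set.range_subset_iff]; rfl
  exact Nat.card_congr
    { toFun := fun C ↦ ⟨fun j ↦ ⟨C.1.col j, (hcol C.1).1 C.2.2 j⟩,
        .of_comp W.subtype C.2.1⟩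
      invFun := fun c ↦ ⟨(of fun j ↦ (c.1 j : Fin m → F))ᵀ,
        c.2.map' W.subtype W.ker_subtype, (hcol _).2 fun j ↦ (c.1 j).2⟩
      left_inv := fun _ ↦ rfl
      right_inv := fun _ ↦ rfl }

theorem card_rowSpace_eq_colSpace_le (V : Submodule F (Fin n → F)) (W : Submodule F (Fin m → F)) :
    #{Y : Matrix (Fin m) (Fin n) F | rowSpace Y = V ∧ colSpace Y ≤ W} =
      chi (Fintype.card F) (finrank F W) (finrank F V) := by
  obtain ⟨B, R, hB, hBR⟩ := exists_rowSpace_eq V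
  have hrow (C : Matrix (Fin m) (Fin (finrank F V)) F) :
      rowSpace (C * B) = V ↔ LinearIndependent F C.col := by
    have hle : rowSpace (C * B) ≤ V := (rowSpace_mul_le C B).trans_eq hB
    rw [linearIndependent_col_iff_rank_eq, ← finrank_colSpace,
      ← colSpace_mul_of_mul_eq_one C hBR, finrank_colSpace, ← finrank_rowSpace]
    exact ⟨fun h ↦ by rw [h], Submodule.eq_of_le_of_finrank_eq hle⟩
  rw [← card_linearIndependent_col_colSpace_le]
  refine (card_bij (fun C _ ↦ C * B) ?_ ?_ ?_).symm
  · intro C hC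
    simpa [hrow, colSpace_mul_of_mul_eq_one C hBR] using hC
  · intro C _ C' _ h
    exact mul_left_injective_of_inv B R hBR h
  · intro Y hY
    rw [mem_filter_univ] at hY
    obtain ⟨C, rfl⟩ := exists_eq_mul_of_rowSpace_le (hY.1.trans hB.symm).le
    exact ⟨C, by simpa [hrow, colSpace_mul_of_mul_eq_one C hBR] using hY, rfl⟩

lemma card_rowSpace_eq (V : Submodule F (Fin n → F)) :
    #{Y : Matrix (Fin m) (Fin n) F | rowSpace Y = V} =
      chi (Fintype.card F) m (finrank F V) := by
  simpa using card_rowSpace_eq_colSpace_le V (⊤ : Submodule F (Fin m → F))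

end Counting

section Channel

variable {T M N : ℕ}

/-- The pairs `(X, Y)` with `⟨Y⟩ ⊆ ⟨X⟩`: the only input-output pairs that a linear operator
channel can produce. -/
def nestedPairs (F : Type) [Field F] [Fintype F] (T M N : ℕ) :
    Finset (Matrix (Fin T) (Fin M) F × Matrix (Fin T) (Fin N) F) :=
  {a | colSpace a.2 ≤ colSpace a.1}

lemma mk_mul_mem_nestedPairs (X : Matrix (Fin T) (Fin M) F) (H : Matrix (Fin M) (Fin N) F) :
    (X, X * H) ∈ nestedPairs F T M N :=
  (mem_filter_univ _).2 (colSpace_mul_le X H)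

lemma card_nestedPairs_rowSpace_eq (U : Submodule F (Fin M → F)) (V : Submodule F (Fin N → F)) :
    #{a ∈ nestedPairs F T M N | Prod.map rowSpace rowSpace a = (U, V)} =
      chi (Fintype.card F) T (finrank F U) *
        chi (Fintype.card F) (finrank F U) (finrank F V) := by
  have hfiber (X : Matrix (Fin T) (Fin M) F) (hX : rowSpace X = U) :
      #{Y : Matrix (Fin T) (Fin N) F | rowSpace Y = V ∧ colSpace Y ≤ colSpace X} =
        chi (Fintype.card F) (finrank F U) (finrank F V) := by
    rw [card_rowSpace_eq_colSpace_le, finrank_colSpace, ← finrank_rowSpace, hX]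
  calc #{a ∈ nestedPairs F T M N | Prod.map rowSpace rowSpace a = (U, V)}
      = ∑ X : Matrix (Fin T) (Fin M) F with rowSpace X = U,
          #{Y : Matrix (Fin T) (Fin N) F | rowSpace Y = V ∧ colSpace Y ≤ colSpace X} := by
        rw [← card_sigma]
        refine card_nbij' (fun a ↦ ⟨a.1, a.2⟩) (fun a ↦ (a.1, a.2)) ?_ ?_ ?_ ?_ <;>
          simp +contextual [nestedPairs, Set.MapsTo, Set.LeftInvOn]
    _ = ∑ X : Matrix (Fin T) (Fin M) F with rowSpace X = U,
          chi (Fintype.card F) (finrank F U) (finrank F V) :=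
        sum_congr rfl fun X hX ↦ hfiber X ((mem_filter_univ X).1 hX)
    _ = chi (Fintype.card F) T (finrank F U) *
          chi (Fintype.card F) (finrank F U) (finrank F V) := by
        rw [sum_const, card_rowSpace_eq, smul_eq_mul]

variable {pX : Matrix (Fin T) (Fin M) F → ℝ} {pH : Matrix (Fin M) (Fin N) F → ℝ}

omit [Field F] [Fintype F] in
lemma jointPMF_nonneg (hpX : ∀ X, 0 ≤ pX X) (hpH : ∀ H, 0 ≤ pH H) (ω) :
    0 ≤ jointPMF pX pH ω :=
  mul_nonneg (hpX ω.1) (hpH ω.2)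

omit [Field F] in
lemma law_input (X : Matrix (Fin T) (Fin M) F) :
    law (jointPMF pX pH) (fun ω ↦ ω.1) X = pX X * ∑ H, pH H := by
  simp [law, jointPMF, Fintype.sum_prod_type_right, mul_sum]

lemma law_input_output (X : Matrix (Fin T) (Fin M) F) (Y : Matrix (Fin T) (Fin N) F) :
    law (jointPMF pX pH) (fun ω ↦ (ω.1, ω.1 * ω.2)) (X, Y) = pX X * prXY pH X Y := by
  simp only [law, jointPMF, Fintype.sum_prod_type_right, Prod.mk.injEq, ite_and, sum_ite_eq',
    mem_univ, if_true, prXY, mul_sum, mul_ite, mul_zero]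

lemma law_output_eq_of_rowSpace_eq (hα : IsAlphaType pX) {Y Y' : Matrix (Fin T) (Fin N) F}
    (h : rowSpace Y = rowSpace Y') :
    law (jointPMF pX pH) (fun ω ↦ ω.1 * ω.2) Y =
      law (jointPMF pX pH) (fun ω ↦ ω.1 * ω.2) Y' := by
  obtain ⟨G, rfl⟩ := exists_GL_mul_eq_of_rowSpace_eq h
  -- The channel commutes with the row operation `G`, which preserves the law of the input.
  refine sum_nbij' (fun ω ↦ (G.val * ω.1, ω.2)) (fun ω ↦ (G⁻¹.val * ω.1, ω.2))
    (by simp) (by simp) ?_ ?_ ?_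
  · intro ω _
    simp [← Matrix.mul_assoc]
  · intro ω _
    simp [← Matrix.mul_assoc]
  · intro ω _
    have hX : pX ω.1 = pX (G.val * ω.1) := hα _ _ (rowSpace_GL_mul G ω.1).symm
    have hmul : G.val * ω.1 * ω.2 = G.val * Y ↔ ω.1 * ω.2 = Y := by
      rw [Matrix.mul_assoc]
      exact (Matrix.mul_right_injective_of_inv G⁻¹.val G.val (by simp)).eq_iff
    simp only [hmul, jointPMF, hX]
    congr

lemma law_input_output_eq_of_rowSpace_eq (hα : IsAlphaType pX) (hsym : RowSpaceSymmetric T pH)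
    {a a' : Matrix (Fin T) (Fin M) F × Matrix (Fin T) (Fin N) F}
    (ha : a ∈ nestedPairs F T M N) (ha' : a' ∈ nestedPairs F T M N)
    (h : Prod.map rowSpace rowSpace a = Prod.map rowSpace rowSpace a') :
    law (jointPMF pX pH) (fun ω ↦ (ω.1, ω.1 * ω.2)) a =
      law (jointPMF pX pH) (fun ω ↦ (ω.1, ω.1 * ω.2)) a' := by
  obtain ⟨hX, hY⟩ := Prod.mk.inj h
  rw [law_input_output, law_input_output, hα _ _ hX,
    hsym _ _ _ _ ((mem_filter_univ a).1 ha) ((mem_filter_univ a').1 ha') hX hY]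

lemma entropy_input (hp : ∀ ω, 0 ≤ jointPMF pX pH ω) (hα : IsAlphaType pX) :
    entropy (jointPMF pX pH) (fun ω ↦ ω.1) =
      entropy (jointPMF pX pH) (fun ω ↦ rowSpace ω.1) +
        ∑ ω, jointPMF pX pH ω * Real.logb 2 (chi (Fintype.card F) T ω.1.rank) := by
  have h := entropy_eq_entropy_comp_add hp (f := fun ω ↦ ω.1) (S := univ) (φ := rowSpace)
    (fun ω ↦ mem_univ ω.1) fun X _ X' _ hX ↦ by rw [law_input, law_input, hα X X' hX]
  simpa only [card_rowSpace_eq, finrank_rowSpace] using h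

lemma entropy_output (hp : ∀ ω, 0 ≤ jointPMF pX pH ω) (hα : IsAlphaType pX) :
    entropy (jointPMF pX pH) (fun ω ↦ ω.1 * ω.2) =
      entropy (jointPMF pX pH) (fun ω ↦ rowSpace (ω.1 * ω.2)) +
        ∑ ω, jointPMF pX pH ω * Real.logb 2 (chi (Fintype.card F) T (ω.1 * ω.2).rank) := by
  have h := entropy_eq_entropy_comp_add hp (f := fun ω ↦ ω.1 * ω.2) (S := univ) (φ := rowSpace)
    (fun ω ↦ mem_univ (ω.1 * ω.2)) fun _ _ _ _ hY ↦ law_output_eq_of_rowSpace_eq hα hY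
  simpa only [card_rowSpace_eq, finrank_rowSpace] using h

lemma entropy_input_output_le (hp : ∀ ω, 0 ≤ jointPMF pX pH ω) :
    entropy (jointPMF pX pH) (fun ω ↦ (ω.1, ω.1 * ω.2)) ≤
      entropy (jointPMF pX pH) (fun ω ↦ (rowSpace ω.1, rowSpace (ω.1 * ω.2))) +
        ∑ ω, jointPMF pX pH ω * Real.logb 2 (chi (Fintype.card F) T ω.1.rank *
          chi (Fintype.card F) ω.1.rank (ω.1 * ω.2).rank : ℕ) := by
  have h := entropy_le_entropy_comp_add hp (f := fun ω ↦ (ω.1, ω.1 * ω.2))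
    (fun ω ↦ mk_mul_mem_nestedPairs ω.1 ω.2) (Prod.map rowSpace rowSpace)
  simpa only [Prod.map_apply, card_nestedPairs_rowSpace_eq, finrank_rowSpace] using h

lemma entropy_input_output_eq (hp : ∀ ω, 0 ≤ jointPMF pX pH ω) (hα : IsAlphaType pX)
    (hsym : RowSpaceSymmetric T pH) :
    entropy (jointPMF pX pH) (fun ω ↦ (ω.1, ω.1 * ω.2)) =
      entropy (jointPMF pX pH) (fun ω ↦ (rowSpace ω.1, rowSpace (ω.1 * ω.2))) +
        ∑ ω, jointPMF pX pH ω * Real.logb 2 (chi (Fintype.card F) T ω.1.rank *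
          chi (Fintype.card F) ω.1.rank (ω.1 * ω.2).rank : ℕ) := by
  have h := entropy_eq_entropy_comp_add hp (f := fun ω ↦ (ω.1, ω.1 * ω.2))
    (φ := Prod.map rowSpace rowSpace) (fun ω ↦ mk_mul_mem_nestedPairs ω.1 ω.2)
    fun _ ha _ ha' h ↦ law_input_output_eq_of_rowSpace_eq hα hsym ha ha' h
  simpa only [Prod.map_apply, card_nestedPairs_rowSpace_eq, finrank_rowSpace] using h

lemma Jrank_eq_sum_jointPMF (q : ℕ) :
    Jrank q pX pH = ∑ ω, jointPMF pX pH ω * Real.logb 2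
      ((chi q T (ω.1 * ω.2).rank : ℝ) / (chi q ω.1.rank (ω.1 * ω.2).rank : ℝ)) := by
  have hrank (ω : Matrix (Fin T) (Fin M) F × Matrix (Fin M) (Fin N) F) :
      (ω.1.rank, (ω.1 * ω.2).rank) ∈ range (T + 1) ×ˢ range (T + 1) :=
    mk_mem_product (mem_range_succ_iff.2 ω.1.rank_le_height)
      (mem_range_succ_iff.2 (ω.1 * ω.2).rank_le_height)
  rw [← sum_law_mul (jointPMF pX pH) hrank
    fun a ↦ Real.logb 2 ((chi q T a.2 : ℝ) / (chi q a.1 a.2 : ℝ)), sum_product]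
  simp only [Jrank, prRankXY, law, Prod.mk.injEq]

lemma Jrank_add_sum_logb :
    Jrank (Fintype.card F) pX pH + ∑ ω, jointPMF pX pH ω *
        Real.logb 2 (chi (Fintype.card F) T ω.1.rank *
          chi (Fintype.card F) ω.1.rank (ω.1 * ω.2).rank : ℕ) =
      ∑ ω, jointPMF pX pH ω * Real.logb 2 (chi (Fintype.card F) T ω.1.rank) +
        ∑ ω, jointPMF pX pH ω * Real.logb 2 (chi (Fintype.card F) T (ω.1 * ω.2).rank) := by
  have hchi {m r : ℕ} (h : r ≤ m) : (chi (Fintype.card F) m r : ℝ) ≠ 0 :=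
    Nat.cast_ne_zero.2 (chi_pos Fintype.one_lt_card h).ne'
  rw [Jrank_eq_sum_jointPMF, ← sum_add_distrib, ← sum_add_distrib]
  refine sum_congr rfl fun ω _ ↦ ?_
  have hX := hchi ω.1.rank_le_height
  have hY := hchi (ω.1 * ω.2).rank_le_height
  have hXY := hchi (rank_mul_le_left ω.1 ω.2)
  rw [Nat.cast_mul, Real.logb_div hY hXY, Real.logb_mul hX hXY]
  ring

lemma miXY_sub_Jrank_add_miRowRow (hp : ∀ ω, 0 ≤ jointPMF pX pH ω) (hα : IsAlphaType pX) :
    miXY pX pH - (Jrank (Fintype.card F) pX pH + miRowRow pX pH) =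
      entropy (jointPMF pX pH) (fun ω ↦ (rowSpace ω.1, rowSpace (ω.1 * ω.2))) +
        ∑ ω, jointPMF pX pH ω * Real.logb 2 (chi (Fintype.card F) T ω.1.rank *
          chi (Fintype.card F) ω.1.rank (ω.1 * ω.2).rank : ℕ) -
      entropy (jointPMF pX pH) (fun ω ↦ (ω.1, ω.1 * ω.2)) := by
  rw [miXY, miRowRow, mutualInfo_eq_entropy hp, mutualInfo_eq_entropy hp, entropy_input hp hα,
    entropy_output hp hα]
  linarith [Jrank_add_sum_logb (pX := pX) (pH := pH)]

end Channel

/-- for an α-type input, I(X;Y) ≥ J(rank X; rank Y) + I(⟨X^T⟩;⟨Y^T⟩),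
with equality if the LOC is row-space symmetric. -/
theorem alpha_type_lower_bound
    {F : Type} [Field F] [Fintype F] (q T M N : ℕ) (hq : Fintype.card F = q)
    (pH : Matrix (Fin M) (Fin N) F → ℝ) (hpH : IsPMF pH)
    (pX : Matrix (Fin T) (Fin M) F → ℝ) (hpX : IsPMF pX) (hα : IsAlphaType pX) :
    Jrank q pX pH + miRowRow pX pH ≤ miXY pX pH
    ∧ (RowSpaceSymmetric T pH →
        miXY pX pH = Jrank q pX pH + miRowRow pX pH) := by
  subst hq
  have hp := jointPMF_nonneg hpX.1 hpH.1
  have hgap := miXY_sub_Jrank_add_miRowRow hp hα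
  refine ⟨?_, fun hsym ↦ ?_⟩
  · linarith [entropy_input_output_le hp]
  · linarith [entropy_input_output_eq hp hα hsym]

end
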